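/- Let M be a cuspidal W_μ-module. If there exists r ∈ ℕ such that Ω^{(r,h)}_{q,p} annihilates M for all h ∈ Γ_μ and all q,p ∈ ℤh, then Ω^{(4r,h)}_{k,s} annihilates M for all h, k ∈ Γ_μ and all s ∈ ℤh. -/

import Mathlib

/-- The differentiator `Ω^{(r,h)}_{k,s} = Σ_{i=0}^{r} (−1)^i C(r,i) e_{k−ih} e_{s+ih}`
acting on a `W_μ`-module `M`, where `E k` is the action of the basis element
`e_k` of `W_μ`. -/
noncomputable def diffE (Γ : AddSubgroup ℂ) (M : Type) [AddCommGroup M] [Module ℂ M]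
    (E : Γ → Module.End ℂ M) (r : ℕ) (h k s : Γ) : Module.End ℂ M :=
  ∑ i ∈ Finset.range (r + 1),
    ((-1 : ℂ) ^ i * (r.choose i : ℂ)) • (E (k - i • h) * E (s + i • h))

theorem brkt_aux {Γ : AddSubgroup ℂ} {M : Type} [AddCommGroup M] [Module ℂ M]
    (E : Γ → Module.End ℂ M)
    (hcomm : ∀ k m : Γ, E k * E m - E m * E k = ((m : ℂ) - (k : ℂ)) • E (k + m))
    (x u v : Γ) : E x * (E u * E v) - (E u * E v) * E x =
      ((u : ℂ) - x) • (E (x + u) * E v) + ((v : ℂ) - x) • (E u * E (x + v)) := by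
  rw [← smul_mul_assoc, ← mul_smul_comm, ← hcomm, ← hcomm]
  noncomm_ring

theorem diffE_succ (Γ : AddSubgroup ℂ) (M : Type) [AddCommGroup M] [Module ℂ M]
    (E : Γ → Module.End ℂ M) (r : ℕ) (h k s : Γ) :
    diffE Γ M E (r + 1) h k s = diffE Γ M E r h k s - diffE Γ M E r h (k - h) (s + h) := by
  unfold diffE
  rw [Finset.sum_range_succ']
  have h1 : ∑ i ∈ Finset.range (r + 1), ((-1 : ℂ) ^ (i + 1) * ((r + 1).choose (i + 1) : ℂ)) •
        (E (k - (i + 1) • h) * E (s + (i + 1) • h)) =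
      ∑ i ∈ Finset.range (r + 1), ((-1 : ℂ) ^ (i + 1) * (r.choose (i + 1) : ℂ)) •
        (E (k - (i + 1) • h) * E (s + (i + 1) • h)) -
      ∑ i ∈ Finset.range (r + 1),
        ((-1 : ℂ) ^ i * (r.choose i : ℂ)) • (E (k - h - i • h) * E (s + h + i • h)) := by
    rw [← Finset.sum_sub_distrib]
    refine Finset.sum_congr rfl fun i _ => ?_
    have e1 : k - h - i • h = k - (i + 1) • h := by rw [succ_nsmul]; abel
    have e2 : s + h + i • h = s + (i + 1) • h := by rw [succ_nsmul]; abel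
    rw [e1, e2, ← sub_smul, Nat.choose_succ_succ]
    congr 1
    push_cast
    ring
  have h2 := Finset.sum_range_succ' (fun i => ((-1 : ℂ) ^ i * (r.choose i : ℂ)) •
    (E (k - i • h) * E (s + i • h))) (r + 1)
  rw [Finset.sum_range_succ] at h2
  simp only [Nat.choose_succ_self, Nat.cast_zero, mul_zero, zero_smul, add_zero] at h2
  rw [h1, h2]
  simp
  abel

theorem diffE_up (Γ : AddSubgroup ℂ) (M : Type) [AddCommGroup M] [Module ℂ M]
    (E : Γ → Module.End ℂ M) (r n : ℕ) (h : Γ)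
    (H : ∀ k s : Γ, (∃ z : ℤ, s = z • h) → diffE Γ M E r h k s = 0) :
    ∀ k s : Γ, (∃ z : ℤ, s = z • h) → diffE Γ M E (r + n) h k s = 0 := by
  induction n with
  | zero => exact H
  | succ n ih =>
    rintro k s ⟨z, rfl⟩
    rw [← add_assoc, diffE_succ, ih _ _ ⟨z, rfl⟩, ih _ _ ⟨z + 1, by rw [add_smul, one_smul]⟩,
      sub_zero]

theorem key_aux (Γ : AddSubgroup ℂ) (M : Type) [AddCommGroup M] [Module ℂ M]
    (E : Γ → Module.End ℂ M)
    (hcomm : ∀ k m : Γ, E k * E m - E m * E k = ((m : ℂ) - (k : ℂ)) • E (k + m))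
    (r : ℕ) (h : Γ)
    (hann : ∀ q p : Γ, (∃ z : ℤ, q = z • h) → (∃ z : ℤ, p = z • h) →
      diffE Γ M E r h q p = 0) (k : Γ) (N : ℤ) :
    ∃ P Q S : ℤ → Module.End ℂ M, ∀ a b : ℤ,
      P a - (2 * (b : ℂ) * h) • diffE Γ M E r h (k + a • h) (N • h - a • h) + Q b
        - (2 * (a : ℂ) * h) • S b = 0 := by
  let c : ℕ → ℂ := fun i => (-1 : ℂ) ^ i * (r.choose i : ℂ)
  let f : ℤ → ℕ → Module.End ℂ M := fun a i =>
    E (k + a • h - i • h) * E (N • h - a • h + i • h)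
  let g : ℤ → ℕ → Module.End ℂ M := fun b i =>
    E (N • h - b • h - i • h) * E (k + b • h + i • h)
  refine ⟨fun a => ∑ i ∈ Finset.range (r + 1), (c i * ((2 * N - a - i) * h - k)) • f a i,
    fun b => ∑ i ∈ Finset.range (r + 1), (c i * ((2 * N - b + i) * h - k)) • g b i,
    fun b => ∑ i ∈ Finset.range (r + 1), c i • g b i, fun a b => ?_⟩
  have h0 := hann ((N - b) • h) ((N - a) • h) ⟨_, rfl⟩ ⟨_, rfl⟩
  have h1 : E (k + (a + b - N) • h) * diffE Γ M E r h ((N - b) • h) ((N - a) • h)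
      - diffE Γ M E r h ((N - b) • h) ((N - a) • h) * E (k + (a + b - N) • h) = 0 := by
    rw [h0]; simp
  rw [← h1]
  unfold diffE
  rw [Finset.mul_sum, Finset.sum_mul, Finset.smul_sum, Finset.smul_sum, ← Finset.sum_sub_distrib,
    ← Finset.sum_sub_distrib, ← Finset.sum_add_distrib, ← Finset.sum_sub_distrib]
  refine Finset.sum_congr rfl fun i _ => ?_
  rw [mul_smul_comm, smul_mul_assoc, ← smul_sub, brkt_aux E hcomm]
  have e1 : k + (a + b - N) • h + ((N - b) • h - i • h) = k + a • h - i • h := by module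
  have e2 : (N - a) • h + i • h = N • h - a • h + i • h := by module
  have e3 : (N - b) • h - i • h = N • h - b • h - i • h := by module
  have e4 : k + (a + b - N) • h + (N • h - a • h + i • h) = k + b • h + i • h := by module
  rw [e1, e2, e4, e3]
  change _ - _ • c i • f a i + _ - _ = c i • (_ • f a i + _ • g b i)
  generalize f a i = F
  generalize g b i = G
  push_cast
  simp only [zsmul_eq_mul, nsmul_eq_mul]
  module

theorem stmt18 (Γ : AddSubgroup ℂ) (M : Type) [AddCommGroup M] [Module ℂ M]
    (E : Γ → Module.End ℂ M)
    (hcomm : ∀ k m : Γ, E k * E m - E m * E k = ((m : ℂ) - (k : ℂ)) • E (k + m))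
    (hwt : (⨆ lam : ℂ, LinearMap.ker (E 0 - lam • (1 : Module.End ℂ M))) = ⊤)
    (hcusp : ∃ C : ℕ, ∀ lam : ℂ,
      Module.finrank ℂ (LinearMap.ker (E 0 - lam • (1 : Module.End ℂ M))) ≤ C)
    (r : ℕ)
    (hann : ∀ h q p : Γ, (∃ z : ℤ, q = z • h) → (∃ z : ℤ, p = z • h) →
      diffE Γ M E r h q p = 0) :
    ∀ h k s : Γ, (∃ z : ℤ, s = z • h) → diffE Γ M E (4 * r) h k s = 0 := by
  intro h
  rcases Nat.eq_zero_or_pos r with rfl | hr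
  · -- r = 0
    have hE : ∀ m : Γ, m ≠ 0 → E m = 0 := by
      intro m hm
      have h1 := hann m 0 m ⟨0, by simp⟩ ⟨1, by simp⟩
      have h2 := hann m m 0 ⟨1, by simp⟩ ⟨0, by simp⟩
      simp only [diffE, zero_add, Finset.range_one, Finset.sum_singleton, pow_zero,
        Nat.choose_self, Nat.cast_one, mul_one, one_smul, zero_smul, sub_zero, add_zero] at h1 h2
      have h3 := hcomm 0 m
      rw [h1, h2, sub_zero, zero_add] at h3
      have hm' : (m : ℂ) ≠ 0 := by simpa using hm
      have h4 := h3.symm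
      rw [smul_eq_zero] at h4
      rcases h4 with h4 | h4
      · exact absurd (by simpa using h4) hm'
      · exact h4
    intro k s _
    have h00 := hann 0 0 0 ⟨0, by simp⟩ ⟨0, by simp⟩
    simp only [diffE, zero_add, mul_zero, Finset.range_one, Finset.sum_singleton, pow_zero,
      Nat.choose_self, Nat.cast_one, mul_one, one_smul, zero_smul, sub_zero, add_zero] at h00 ⊢
    by_cases hk : k = 0
    · by_cases hs : s = 0
      · rw [hk, hs, h00]
      · rw [hE s hs, mul_zero]
    · rw [hE k hk, zero_mul]
  by_cases hh : h = 0
  · subst hh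
    obtain ⟨n, hn⟩ : ∃ n, 4 * r = n + 1 := ⟨4 * r - 1, by omega⟩
    intro k s _
    rw [hn, diffE_succ]
    simp
  have hh' : (h : ℂ) ≠ 0 := by simpa using hh
  have e : 4 * r = (r + 2) + (3 * r - 2) := by omega
  rw [e]
  apply diffE_up
  rintro k _ ⟨N, rfl⟩
  obtain ⟨P, Q, S, H⟩ := key_aux Γ M E hcomm r h (hann h) k N
  have hD : ∀ a : ℤ, (2 * (h : ℂ)) • diffE Γ M E r h (k + a • h) (N • h - a • h) =
      Q 1 - Q 0 - (2 * (a : ℂ) * h) • (S 1 - S 0) := by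
    intro a
    have h1 := H a 1
    have h0 := H a 0
    rw [← sub_eq_zero, ← neg_eq_zero]
    calc _ = (P a - (2 * ((1 : ℤ) : ℂ) * h) • diffE Γ M E r h (k + a • h) (N • h - a • h) + Q 1
        - (2 * (a : ℂ) * h) • S 1) - (P a - (2 * ((0 : ℤ) : ℂ) * h) •
          diffE Γ M E r h (k + a • h) (N • h - a • h) + Q 0 - (2 * (a : ℂ) * h) • S 0) := by
          push_cast
          module
      _ = 0 := by rw [h1, h0, sub_zero]
  have d0 := hD 0
  have d1 := hD (-1)
  have d2 := hD (-2)
  have e1 : k + (-1 : ℤ) • h = k - h := by module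
  have e2 : k + (-2 : ℤ) • h = k - h - h := by module
  have e3 : N • h - (-1 : ℤ) • h = N • h + h := by module
  have e4 : N • h - (-2 : ℤ) • h = N • h + h + h := by module
  rw [zero_smul, add_zero, sub_zero] at d0
  rw [e1, e3] at d1
  rw [e2, e4] at d2
  have h2 : (2 * (h : ℂ)) ≠ 0 := by simpa using hh
  have : (2 * (h : ℂ)) • diffE Γ M E (r + 2) h k (N • h) = 0 := by
    rw [diffE_succ, diffE_succ, diffE_succ, smul_sub, smul_sub, smul_sub, d0, d1, d2]
    push_cast
    module
  exact (smul_eq_zero.mp this).resolve_left h2
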